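/- arXiv:1510.05904 — 4 statements merged into one kernel-verified Lean document; each statement's English description precedes it below -/
import Mathlib

section
/- Let m be a positive integer, let G be an m-boundedly generated group, and let L ≤ G be a subgroup of finite index. Then there exists a subgroup U ≤ L such that U can be generated by m elements and [G : U] ≤ exp(G, L)^m; in particular U has finite index in G. -/
/-- A group `G` is `m`-boundedly generated (witnessed by `g : Fin m → G`) if every
element of `G` is a product `g 0 ^ k 0 * g 1 ^ k 1 * ⋯ * g (m-1) ^ k (m-1)`
for some integers `k i`, i.e. `G = ⟨g 0⟩⟨g 1⟩⋯⟨g (m-1)⟩` as a set. -/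
def IsBoundedlyGeneratedBy {G : Type*} [Group G] (m : ℕ) (g : Fin m → G) : Prop :=
  ∀ x : G, ∃ k : Fin m → ℤ, x = (List.ofFn fun i => g i ^ k i).prod

/-- `subgroupExp L` is `exp(G, L)`: the least positive integer `N` such that
`a ^ N ∈ L` for every `a ∈ G`. -/
noncomputable def subgroupExp {G : Type*} [Group G] (L : Subgroup G) : ℕ :=
  sInf {N : ℕ | 0 < N ∧ ∀ a : G, a ^ N ∈ L}

/-!
Put `N = exp(G, L)`. Dividing each exponent `k i` by `N` writes an element of `G` as a product of
factors `g i ^ r i * (g i ^ N) ^ q i` with `0 ≤ r i < N`. Moving all the `g i ^ r i` to the left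
conjugates each `(g i ^ N) ^ q i` by an element depending only on `r`, so `G` is covered by `N ^ m`
left cosets of subgroups, each generated by `m` conjugates of the `g i ^ N`. By B. H. Neumann's
covering lemma one of these subgroups has index at most `N ^ m`, and it lies in `L`.
-/

theorem exists_forall_pow_mem_of_finiteIndex {G : Type*} [Group G] (L : Subgroup G)
    [L.FiniteIndex] : ∃ N : ℕ, 0 < N ∧ ∀ a : G, a ^ N ∈ L :=
  ⟨L.normalCore.index, Nat.pos_of_ne_zero Subgroup.FiniteIndex.index_ne_zero,
    fun a => L.normalCore_le (L.normalCore.pow_index_mem a)⟩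

theorem subgroupExp_pos {G : Type*} [Group G] (L : Subgroup G) [L.FiniteIndex] :
    0 < subgroupExp L :=
  (Nat.sInf_mem (exists_forall_pow_mem_of_finiteIndex L)).1

theorem pow_subgroupExp_mem {G : Type*} [Group G] (L : Subgroup G) [L.FiniteIndex] (a : G) :
    a ^ subgroupExp L ∈ L :=
  (Nat.sInf_mem (exists_forall_pow_mem_of_finiteIndex L)).2 a

theorem exists_zpow_eq_pow_mul_pow_zpow {G : Type*} [Group G] {n : ℕ} (hn : n ≠ 0) (g : G)
    (k : ℤ) : ∃ (r : Fin n) (q : ℤ), g ^ k = g ^ (r : ℕ) * (g ^ n) ^ q := by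
  have hn' : (0 : ℤ) < n := by positivity
  obtain ⟨r, hr⟩ := Int.eq_ofNat_of_zero_le (Int.emod_nonneg k hn'.ne')
  have hrn : r < n := by
    have := Int.emod_lt_of_pos k hn'
    omega
  refine ⟨⟨r, hrn⟩, k / n, ?_⟩
  rw [← zpow_natCast, ← zpow_natCast g n, ← zpow_mul, ← zpow_add, ← hr, Int.emod_add_mul_ediv]

/-- The product `a (i + 1) * a (i + 2) * ⋯ * a (m - 1)` of the entries of `a` after the `i`-th one.
Collecting the `a j` on the left of `a 0 * b 0 * a 1 * b 1 * ⋯` moves them past `b i` exactly for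
`j > i`, so that `b i` is conjugated by this product. -/
def suffixProd {M : Type*} [Monoid M] {m : ℕ} (a : Fin m → M) (i : Fin m) : M :=
  ((List.ofFn a).drop (i + 1)).prod

theorem prod_ofFn_mul_eq_mul_prod_ofFn_conj {G : Type*} [Group G] {m : ℕ} (a b : Fin m → G) :
    (List.ofFn fun i => a i * b i).prod =
      (List.ofFn a).prod * (List.ofFn fun i => MulAut.conj (suffixProd a i)⁻¹ (b i)).prod := by
  induction m with
  | zero => simp
  | succ m ih =>
    have suffixProd_zero : suffixProd a 0 = (List.ofFn fun i => a i.succ).prod := by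
      simp [suffixProd]
    have suffixProd_succ (i : Fin m) : suffixProd a i.succ = suffixProd (fun j => a j.succ) i := by
      simp [suffixProd]
    simp only [List.ofFn_succ, List.prod_cons, suffixProd_zero, suffixProd_succ,
      ih (fun i => a i.succ) fun i => b i.succ, MulAut.conj_apply]
    group

/-- The subgroup generated by the conjugates `c i * g i ^ n i * (c i)⁻¹`. The subgroup `U` of the
theorem is of this form. -/
def conjPowClosure {ι G : Type*} [Group G] (g : ι → G) (n : ι → ℕ) (c : ι → G) : Subgroup G :=
  Subgroup.closure (Set.range fun i => MulAut.conj (c i) (g i ^ n i))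

namespace IsBoundedlyGeneratedBy

variable {G : Type*} [Group G] {m : ℕ} {g : Fin m → G} {n : Fin m → ℕ}

open scoped Pointwise

theorem iUnion_smul_conjPowClosure_eq_univ (hg : IsBoundedlyGeneratedBy m g)
    (hn : ∀ i, n i ≠ 0) :
    ⋃ r : ∀ i, Fin (n i), (List.ofFn fun i => g i ^ (r i : ℕ)).prod •
      (conjPowClosure g n fun i => (suffixProd (fun j => g j ^ (r j : ℕ)) i)⁻¹ : Set G) =
      Set.univ := by
  refine Set.eq_univ_of_forall fun x => ?_
  obtain ⟨k, rfl⟩ := hg x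
  choose r q hrq using fun i => exists_zpow_eq_pow_mul_pow_zpow (hn i) (g i) (k i)
  refine Set.mem_iUnion_of_mem r ?_
  simp only [hrq, prod_ofFn_mul_eq_mul_prod_ofFn_conj]
  refine Set.smul_mem_smul_set (Subgroup.list_prod_mem _ fun y hy => ?_)
  obtain ⟨i, rfl⟩ := List.mem_ofFn.mp hy
  rw [map_zpow]
  exact zpow_mem (Subgroup.subset_closure (Set.mem_range_self i)) (q i)

theorem exists_index_conjPowClosure_le (hg : IsBoundedlyGeneratedBy m g) (hn : ∀ i, n i ≠ 0) :
    ∃ c : Fin m → G,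
      (conjPowClosure g n c).FiniteIndex ∧ (conjPowClosure g n c).index ≤ ∏ i, n i := by
  have hcover := hg.iUnion_smul_conjPowClosure_eq_univ hn
  rw [← Set.biUnion_univ, ← Finset.coe_univ] at hcover
  obtain ⟨r, -, hfin, hle⟩ := Subgroup.exists_index_le_card_of_leftCoset_cover hcover
  exact ⟨_, hfin, by simpa using hle⟩

end IsBoundedlyGeneratedBy

theorem main_lemma_bounded_generation_general {G : Type*} [Group G] {m : ℕ} {g : Fin m → G}
    (hg : IsBoundedlyGeneratedBy m g) {n : Fin m → ℕ} (hn : ∀ i, n i ≠ 0) (L : Subgroup G)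
    (hL : ∀ i x, MulAut.conj x (g i ^ n i) ∈ L) :
    ∃ U : Subgroup G, U ≤ L ∧
      (∃ S : Finset G, S.card ≤ m ∧ Subgroup.closure (S : Set G) = U) ∧
      U.index ≤ ∏ i, n i ∧ U.index ≠ 0 := by
  classical
  obtain ⟨c, hfin, hle⟩ := hg.exists_index_conjPowClosure_le hn
  refine ⟨conjPowClosure g n c, ?_,
    ⟨Finset.univ.image fun i => MulAut.conj (c i) (g i ^ n i), ?_, ?_⟩, hle, hfin.index_ne_zero⟩
  · exact (Subgroup.closure_le L).mpr (Set.range_subset_iff.mpr fun i => hL i (c i))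
  · exact Finset.card_image_le.trans_eq (Finset.card_fin m)
  · rw [Finset.coe_image, Finset.coe_univ, Set.image_univ, conjPowClosure]

/-- Let `m` be a positive integer, let `G` be an `m`-boundedly generated group, and let
`L ≤ G` be a subgroup of finite index.  Then there exists a subgroup `U ≤ L` that can
be generated by `m` elements and satisfies `[G : U] ≤ exp(G, L) ^ m`; in particular
`U` has finite index in `G`. -/
theorem main_lemma_bounded_generation
    {G : Type*} [Group G] (m : ℕ) (hm : 0 < m)
    (hbg : ∃ g : Fin m → G, IsBoundedlyGeneratedBy m g)
    (L : Subgroup G) (hL : L.index ≠ 0) :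
    ∃ U : Subgroup G, U ≤ L ∧
      (∃ S : Finset G, S.card ≤ m ∧ Subgroup.closure (S : Set G) = U) ∧
      U.index ≤ subgroupExp L ^ m ∧ U.index ≠ 0 := by
  obtain ⟨g, hg⟩ := hbg
  have : L.FiniteIndex := ⟨hL⟩
  simpa using main_lemma_bounded_generation_general hg (fun _ => (subgroupExp_pos L).ne') L
    fun i x => map_pow (MulAut.conj x) (g i) _ ▸ pow_subgroupExp_mem L _
end

section
/- Let G be a group that is m-boundedly generated with G = ⟨g₁⟩⋯⟨g_m⟩, and let n be a positive integer. For a tuple k = (k₁, …, k_m) ∈ {0, …, n−1}^m and 1 ≤ ℓ ≤ m+1 set P_ℓ^k := g_ℓ^{k_ℓ} ⋯ g_m^{k_m} (with P_{m+1}^k = 1). Then G is the union, over all k ∈ {0, …, n−1}^m, of the n^m left cosets P₁^k · ⟨ ((P_{ℓ+1}^k)⁻¹ g_ℓ P_{ℓ+1}^k)ⁿ : 1 ≤ ℓ ≤ m ⟩; moreover each of these subgroups is generated by m elements, each of which is an n-th power of an element of G. -/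
open Pointwise

/-- For a tuple `k ∈ {0, …, n-1}^m`, `cosetSubgroup g n k` is the subgroup
`⟨((P (ℓ+1))⁻¹ g ℓ P (ℓ+1)) ^ n : 1 ≤ ℓ ≤ m⟩` where
`P ℓ = g ℓ ^ k ℓ ⋯ g m ^ k m` (one-based indexing, `P (m+1) = 1`). -/
def cosetSubgroup {G : Type*} [Group G] {m : ℕ} (g : Fin m → G) (n : ℕ)
    (k : Fin m → ℕ) : Subgroup G :=
  Subgroup.closure (Set.range fun ℓ : Fin m =>
    ((((List.ofFn fun j : Fin m => g j ^ k j).drop ((ℓ : ℕ) + 1)).prod)⁻¹ * g ℓ *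
      (((List.ofFn fun j : Fin m => g j ^ k j).drop ((ℓ : ℕ) + 1)).prod)) ^ n)

/-!
Replacing the factors `x ℓ` of a product by `y ℓ` one at a time from the left changes the product,
on its right, by the conjugate of `(x ℓ)⁻¹ * y ℓ` by the part of the `x`-product beyond `ℓ`. For
`x ℓ = g ℓ ^ k ℓ` and `y ℓ = g ℓ ^ a ℓ` with `k ℓ` the residue of `a ℓ` modulo `n`, these
corrections are powers of the generators of `cosetSubgroup g n k`.
-/

/-- The tail product `x ℓ * ⋯ * x (m - 1)`, equal to `1` for `ℓ ≥ m`. For `x j = g j ^ k j` this is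
the `P_{ℓ+1}^k` of the theorem, since indices start at `0` here. -/
def tailProd {M : Type*} [Monoid M] {m : ℕ} (x : Fin m → M) (ℓ : ℕ) : M :=
  ((List.ofFn x).drop ℓ).prod

theorem tailProd_zero {M : Type*} [Monoid M] {m : ℕ} (x : Fin m → M) :
    tailProd x 0 = (List.ofFn x).prod :=
  rfl

theorem tailProd_succ {M : Type*} [Monoid M] {m : ℕ} (x : Fin (m + 1) → M) (ℓ : ℕ) :
    tailProd x (ℓ + 1) = tailProd (fun i => x i.succ) ℓ := by
  simp only [tailProd, List.ofFn_succ, List.drop_succ_cons]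

section Group

variable {G : Type*} [Group G]

theorem inv_prod_ofFn_mul_prod_ofFn {m : ℕ} (x y : Fin m → G) :
    (List.ofFn x).prod⁻¹ * (List.ofFn y).prod =
      (List.ofFn fun ℓ : Fin m =>
        (tailProd x (ℓ + 1))⁻¹ * ((x ℓ)⁻¹ * y ℓ) * tailProd x (ℓ + 1)).prod := by
  induction m with
  | zero => simp
  | succ m ih =>
    simp only [List.ofFn_succ, List.prod_cons, Fin.val_zero, Fin.val_succ, tailProd_succ,
      tailProd_zero, ← ih]
    group

theorem inv_mul_mul_zpow (p a : G) (z : ℤ) : (p⁻¹ * a * p) ^ z = p⁻¹ * a ^ z * p := by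
  simpa only [inv_inv] using conj_zpow (a := p⁻¹) (b := a) (i := z)

theorem inv_mul_zpow_mul_mem_of_dvd {H : Subgroup G} {p a : G} {n : ℕ} {z : ℤ}
    (hH : (p⁻¹ * a * p) ^ n ∈ H) (hz : (n : ℤ) ∣ z) : p⁻¹ * a ^ z * p ∈ H := by
  obtain ⟨q, rfl⟩ := hz
  rw [← inv_mul_mul_zpow, zpow_mul, zpow_natCast]
  exact H.zpow_mem hH q

theorem cosetSubgroup_eq_closure_range_tailProd {m : ℕ} (g : Fin m → G) (n : ℕ) (k : Fin m → ℕ) :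
    cosetSubgroup g n k = Subgroup.closure (Set.range fun ℓ : Fin m =>
      ((tailProd (fun j => g j ^ k j) (ℓ + 1))⁻¹ * g ℓ *
        tailProd (fun j => g j ^ k j) (ℓ + 1)) ^ n) :=
  rfl

theorem prod_zpow_mem_leftCoset_cosetSubgroup {m n : ℕ} (g : Fin m → G) {k : Fin m → ℕ}
    {a : Fin m → ℤ} (h : ∀ i, k i ≡ a i [ZMOD n]) :
    (List.ofFn fun i => g i ^ a i).prod ∈
      (List.ofFn fun i => g i ^ k i).prod • (cosetSubgroup g n k : Set G) := by
  rw [mem_leftCoset_iff, inv_prod_ofFn_mul_prod_ofFn, cosetSubgroup_eq_closure_range_tailProd]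
  refine Subgroup.list_prod_mem _ (List.forall_mem_ofFn_iff.mpr fun ℓ => ?_)
  have hquot : (g ℓ ^ k ℓ)⁻¹ * g ℓ ^ a ℓ = g ℓ ^ (a ℓ - k ℓ) := by
    rw [← zpow_natCast, ← zpow_neg, ← zpow_add, neg_add_eq_sub]
  rw [hquot]
  exact inv_mul_zpow_mul_mem_of_dvd (Subgroup.subset_closure ⟨ℓ, rfl⟩) (h ℓ).dvd

theorem exists_finset_closure_eq_closure_range_pow {ι : Type*} [Fintype ι] (y : ι → G) (n : ℕ) :
    ∃ S : Finset G, S.card ≤ Fintype.card ι ∧ (∀ s ∈ S, ∃ z : G, s = z ^ n) ∧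
      Subgroup.closure (S : Set G) = Subgroup.closure (Set.range fun i => y i ^ n) := by
  classical
  refine ⟨Finset.univ.image fun i => y i ^ n, Finset.card_image_le, ?_, ?_⟩
  · exact Finset.forall_mem_image.mpr fun i _ => ⟨y i, rfl⟩
  · rw [Finset.coe_image, Finset.coe_univ, Set.image_univ]

end Group

theorem natMod_modEq (a : ℤ) {n : ℕ} (hn : n ≠ 0) : (a.natMod n : ℤ) ≡ a [ZMOD n] := by
  rw [Int.natMod, Int.toNat_of_nonneg (Int.emod_nonneg a (Int.natCast_ne_zero.mpr hn))]
  exact Int.mod_modEq a n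

/-- Let `G` be `m`-boundedly generated with `G = ⟨g 1⟩⋯⟨g m⟩`, and let `n` be a
positive integer.  For `k = (k 1, …, k m) ∈ {0, …, n-1}^m` and `1 ≤ ℓ ≤ m + 1` set
`P ℓ = g ℓ ^ k ℓ ⋯ g m ^ k m` (so `P (m+1) = 1`).  Then `G` is the union, over all
such tuples `k`, of the `n ^ m` left cosets
`P 1 • ⟨((P (ℓ+1))⁻¹ g ℓ P (ℓ+1)) ^ n : 1 ≤ ℓ ≤ m⟩`; moreover each of these
subgroups is generated by `m` elements, each of which is an `n`-th power of an
element of `G`. -/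
theorem cover_by_cosets_of_bounded_generation
    {G : Type*} [Group G] (m : ℕ) (hm : 0 < m) (g : Fin m → G)
    (hbg : IsBoundedlyGeneratedBy m g) (n : ℕ) (hn : 0 < n) :
    (∀ x : G, ∃ k : Fin m → ℕ, (∀ i, k i < n) ∧
      x ∈ ((List.ofFn fun j : Fin m => g j ^ k j).prod) •
        (cosetSubgroup g n k : Set G)) ∧
    ∀ k : Fin m → ℕ, (∀ i, k i < n) →
      ∃ S : Finset G, S.card ≤ m ∧ (∀ s ∈ S, ∃ y : G, s = y ^ n) ∧
        Subgroup.closure (S : Set G) = cosetSubgroup g n k := by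
  constructor
  · intro x
    obtain ⟨a, rfl⟩ := hbg x
    exact ⟨fun i => (a i).natMod n, fun i => Int.natMod_lt hn.ne',
      prod_zpow_mem_leftCoset_cosetSubgroup g fun i => natMod_modEq (a i) hn.ne'⟩
  · intro k _
    simpa only [cosetSubgroup_eq_closure_range_tailProd, Fintype.card_fin] using
      exists_finset_closure_eq_closure_range_pow (fun ℓ : Fin m =>
        (tailProd (fun j => g j ^ k j) (ℓ + 1))⁻¹ * g ℓ * tailProd (fun j => g j ^ k j) (ℓ + 1)) n
end

section
/- Let m be a positive integer and let G be an infinite, residually finite, m-boundedly generated group. Then the rank gradient of G is zero: inf over all finite index subgroups H ≤ G of (rank(H) − 1)/[G : H] equals 0. Equivalently, for every ε > 0 there exists a finite index subgroup H ≤ G with (rank(H) − 1)/[G : H] < ε. -/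
/-!
Choose a finite-index subgroup `N` and a set `T` of cosets of `N`, of small density in `G ⧸ N`, such
that any `m + 1` elements of `G` can move a common coset into `T`. For each generator `g i`, close
up the first-return arrows of `g i` on `T` to elements of `N`: this gives at most `m * |T|` elements
of `N`. Writing `x⁻¹ = g 0 ^ k 0 * ⋯ * g (m - 1) ^ k (m - 1)` and moving a coset so that the whole
path traced by the factors of `x` has its vertices in `T`, one sees that the subgroup `H ≤ N`
generated by these elements contains a two-sided translate of `x` by coset representatives of `N`.
So finitely many cosets of conjugates of `H` cover `G`, and by B. H. Neumann's lemma `H` has finite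
index. This index is at least `[G : N]`, hence large compared to `m * |T|`.
-/

/-- A subset `T` of a `G`-set absorbs `s`-tuples if any `s` elements of `G` move some common point
into `T`. Sparse sets with this property in finite `G`-sets bound the number of generators. -/
def AbsorbsTuples (G : Type*) {X : Type*} [SMul G X] (s : ℕ) (T : Set X) : Prop :=
  ∀ x : Fin s → G, ∃ u : X, ∀ j, x j • u ∈ T

section AbsorbsTuples

variable {G X Y : Type*} [Group G] [MulAction G X] [MulAction G Y]

lemma AbsorbsTuples.preimage_union_range {s : ℕ} {T : Set X} (hT : AbsorbsTuples G s T)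
    (π : Y →[G] X) {σ : X → Y} (hσ : Function.RightInverse σ π) :
    AbsorbsTuples G (s + 1) (π ⁻¹' T ∪ Set.range σ) := by
  intro x
  obtain ⟨u, hu⟩ := hT fun j => x j.castSucc
  have lift_eq : π ((x (Fin.last s))⁻¹ • σ (x (Fin.last s) • u)) = u := by
    rw [map_smul, hσ, inv_smul_smul]
  refine ⟨(x (Fin.last s))⁻¹ • σ (x (Fin.last s) • u), Fin.lastCases ?_ fun j => ?_⟩
  · exact Or.inr ⟨_, (smul_inv_smul _ _).symm⟩
  · left
    rw [Set.mem_preimage, map_smul, lift_eq]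
    exact hu j

lemma ncard_preimage_quotientMapOfLE {N' N : Subgroup G} (h : N' ≤ N) (T : Set (G ⧸ N)) :
    (Subgroup.quotientMapOfLE h ⁻¹' T).ncard = T.ncard * N'.relIndex N := by
  have preimage_eq : Subgroup.quotientMapOfLE h ⁻¹' T =
      Subgroup.quotientEquivProdOfLE h ⁻¹' T ×ˢ Set.univ := by
    ext u
    induction u using QuotientGroup.induction_on
    simp [Subgroup.quotientMapOfLE]
  rw [preimage_eq, Set.ncard_preimage_of_injective_subset_range (Equiv.injective _) (by simp),
    Set.ncard_prod, Set.ncard_univ]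
  rfl

lemma AbsorbsTuples.exists_succ {N' N : Subgroup G} [N.FiniteIndex] (h : N' ≤ N) {s : ℕ}
    {T : Set (G ⧸ N)} (hT : AbsorbsTuples G s T) :
    ∃ T' : Set (G ⧸ N'), T'.ncard ≤ T.ncard * N'.relIndex N + N.index ∧
      AbsorbsTuples G (s + 1) T' := by
  let π : G ⧸ N' →[G] G ⧸ N :=
    { toFun := Subgroup.quotientMapOfLE h
      map_smul' := fun a u => by
        induction u using QuotientGroup.induction_on
        rfl }
  let σ : G ⧸ N → G ⧸ N' := fun u => (u.out : G)
  have hσ : Function.RightInverse σ π := fun u => u.out_eq'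
  refine ⟨π ⁻¹' T ∪ Set.range σ, (Set.ncard_union_le _ _).trans ?_, hT.preimage_union_range π hσ⟩
  gcongr
  · exact (ncard_preimage_quotientMapOfLE h T).le
  · rw [← Set.image_univ, Subgroup.index, ← Set.ncard_univ]
    exact Set.ncard_image_le

theorem exists_sparse_absorbsTuples
    (hG : ∀ n : ℕ, ∃ K : Subgroup G, K.FiniteIndex ∧ n ≤ K.index) (s : ℕ) {ε : ℝ} (hε : 0 < ε) :
    ∃ N : Subgroup G, N.FiniteIndex ∧ ∃ T : Set (G ⧸ N),
      T.ncard ≤ ε * N.index ∧ AbsorbsTuples G s T := by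
  induction s generalizing ε with
  | zero => exact ⟨⊤, inferInstance, ∅, by simpa using hε.le, fun x => ⟨(1 : G), (·.elim0)⟩⟩
  | succ s ih =>
    obtain ⟨N, hN, T, hTcard, hT⟩ := ih (half_pos hε)
    obtain ⟨n, hn⟩ := exists_nat_ge (N.index / (ε / 2))
    obtain ⟨K, hK, hnK⟩ := hG n
    obtain ⟨T', hT'card, hT'⟩ := hT.exists_succ (inf_le_left : N ⊓ K ≤ N)
    have index_N_le : (N.index : ℝ) ≤ ε / 2 * (N ⊓ K).index := by
      rw [← div_le_iff₀' (half_pos hε)]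
      exact hn.trans (mod_cast hnK.trans (Subgroup.index_antitone inf_le_right))
    refine ⟨N ⊓ K, inferInstance, T', ?_, hT'⟩
    calc (T'.ncard : ℝ) ≤ T.ncard * (N ⊓ K).relIndex N + N.index := mod_cast hT'card
      _ ≤ ε / 2 * N.index * (N ⊓ K).relIndex N + ε / 2 * (N ⊓ K).index := by gcongr
      _ = ε * (N ⊓ K).index := by
        rw [← Subgroup.relIndex_mul_index (inf_le_left : N ⊓ K ≤ N)]
        push_cast
        ring

end AbsorbsTuples

section SchreierElement

variable {G : Type*} [Group G] (N : Subgroup G)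

/-- The Schreier element of `a` at the coset `u`: the arrow `u ⟶ a • u` of the action groupoid of
`G ⧸ N`, closed up to an element of `N` by the representatives `Quotient.out` of its endpoints. -/
noncomputable def schreierElement (a : G) (u : G ⧸ N) : G :=
  (a • u).out⁻¹ * a * u.out

lemma schreierElement_mem (a : G) (u : G ⧸ N) : schreierElement N a u ∈ N := by
  rw [schreierElement, mul_assoc, ← QuotientGroup.eq, QuotientGroup.out_eq', ← smul_eq_mul,
    ← MulAction.Quotient.smul_coe, QuotientGroup.out_eq']

@[simp]
lemma schreierElement_one (u : G ⧸ N) : schreierElement N 1 u = 1 := by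
  simp [schreierElement]

lemma schreierElement_mul (a b : G) (u : G ⧸ N) :
    schreierElement N (a * b) u = schreierElement N a (b • u) * schreierElement N b u := by
  simp [schreierElement, mul_smul, mul_assoc]

lemma schreierElement_inv (a : G) (u : G ⧸ N) :
    schreierElement N a⁻¹ u = (schreierElement N a (a⁻¹ • u))⁻¹ := by
  simp [schreierElement, mul_assoc]

lemma exists_isLeast_return_time {X : Type*} [MulAction G X] [Finite X] (g : G) {T : Set X} {u : X}
    (hu : u ∈ T) : ∃ d, IsLeast {d : ℕ | 0 < d ∧ g ^ d • u ∈ T} d := by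
  classical
  have exists_return : ∃ d : ℕ, 0 < d ∧ g ^ d • u ∈ T := by
    obtain ⟨d, hd, hgd⟩ := (MulAction.injective g).mem_periodicPts u
    refine ⟨d, hd, ?_⟩
    rwa [← smul_iterate_apply, hgd.eq]
  exact ⟨_, Nat.isLeast_find exists_return⟩

variable {N}

lemma schreierElement_pow_mem {M : Subgroup G} {T : Set (G ⧸ N)} {g : G} {d : G ⧸ N → ℕ}
    (hd : ∀ u ∈ T, IsLeast {d : ℕ | 0 < d ∧ g ^ d • u ∈ T} (d u))
    (hM : ∀ u ∈ T, schreierElement N (g ^ d u) u ∈ M) (k : ℕ) {u : G ⧸ N} (hu : u ∈ T)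
    (hku : g ^ k • u ∈ T) : schreierElement N (g ^ k) u ∈ M := by
  induction k using Nat.strong_induction_on generalizing u with
  | _ k ih =>
    rcases k.eq_zero_or_pos with rfl | hk
    · simp
    · obtain ⟨⟨hd_pos, hdu⟩, hd_le⟩ := hd u hu
      obtain ⟨l, rfl⟩ := Nat.exists_eq_add_of_le' (hd_le ⟨hk, hku⟩)
      rw [pow_add, mul_smul] at hku
      rw [pow_add, schreierElement_mul]
      exact M.mul_mem (ih l (by omega) hdu hku) (hM u hu)

lemma schreierElement_zpow_mem {M : Subgroup G} {T : Set (G ⧸ N)} {g : G} {d : G ⧸ N → ℕ}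
    (hd : ∀ u ∈ T, IsLeast {d : ℕ | 0 < d ∧ g ^ d • u ∈ T} (d u))
    (hM : ∀ u ∈ T, schreierElement N (g ^ d u) u ∈ M) (k : ℤ) {u : G ⧸ N} (hu : u ∈ T)
    (hku : g ^ k • u ∈ T) : schreierElement N (g ^ k) u ∈ M := by
  obtain ⟨n, rfl | rfl⟩ := k.eq_nat_or_neg
  · rw [zpow_natCast] at hku ⊢
    exact schreierElement_pow_mem hd hM n hu hku
  · rw [zpow_neg, zpow_natCast] at hku ⊢
    rw [schreierElement_inv]
    exact M.inv_mem (schreierElement_pow_mem hd hM n hku (by rwa [smul_inv_smul]))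

variable (N) in
lemma exists_finset_schreierElement_zpow_mem [N.FiniteIndex] (T : Set (G ⧸ N)) (g : G) :
    ∃ S : Finset G, S.card ≤ T.ncard ∧ (S : Set G) ⊆ N ∧ ∀ k : ℤ, ∀ u ∈ T, g ^ k • u ∈ T →
      schreierElement N (g ^ k) u ∈ Subgroup.closure (S : Set G) := by
  classical
  choose! d hd using fun u (hu : u ∈ T) => exists_isLeast_return_time g hu
  refine ⟨T.toFinite.toFinset.image fun u => schreierElement N (g ^ d u) u, ?_, ?_,
    fun k u hu => schreierElement_zpow_mem hd (fun v hv => Subgroup.subset_closure ?_) k hu⟩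
  · rw [Set.ncard_eq_toFinset_card T]
    exact Finset.card_image_le
  · rw [Finset.coe_image, Set.image_subset_iff]
    exact fun u _ => schreierElement_mem N _ u
  · simpa using ⟨v, hv, rfl⟩

lemma schreierElement_inv_partialProd_mem {M : Subgroup G} {m : ℕ} {a : Fin m → G} {u : G ⧸ N}
    (h : ∀ i : Fin m, schreierElement N (a i)⁻¹ ((Fin.partialProd a i.castSucc)⁻¹ • u) ∈ M)
    (i : Fin (m + 1)) : schreierElement N (Fin.partialProd a i)⁻¹ u ∈ M := by
  induction i using Fin.induction with
  | zero => simp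
  | succ i ih =>
    rw [Fin.partialProd_succ, mul_inv_rev, schreierElement_mul]
    exact M.mul_mem (h i) ih

end SchreierElement

section RankGradient

open scoped Pointwise

variable {G : Type*} [Group G]

lemma finiteIndex_of_twoSided_cover {ι : Type*} [Finite ι] (e : ι → G) {M : Subgroup G}
    (h : ∀ x : G, ∃ i j, (e j)⁻¹ * x * e i ∈ M) : M.FiniteIndex := by
  have := Fintype.ofFinite ι
  -- `e j * M * (e i)⁻¹` is a left coset of the conjugate of `M` by `e i`.
  have cover : ⋃ p ∈ (Finset.univ : Finset (ι × ι)), (e p.2 * (e p.1)⁻¹) •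
      (M.map (MulAut.conj (e p.1)).toMonoidHom : Set G) = Set.univ := by
    refine Set.eq_univ_of_forall fun x => ?_
    obtain ⟨i, j, hx⟩ := h x
    refine Set.mem_biUnion (Finset.mem_univ (i, j)) ((mem_leftCoset_iff _).2 ⟨_, hx, ?_⟩)
    simp [mul_assoc]
  obtain ⟨p, -, hp⟩ := Subgroup.exists_finiteIndex_of_leftCoset_cover cover
  rw [Subgroup.finiteIndex_iff] at hp ⊢
  rwa [← Subgroup.index_map_equiv M (MulAut.conj (e p.1))]

lemma IsBoundedlyGeneratedBy.exists_partialProd_eq {m : ℕ} {g : Fin m → G}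
    (hg : IsBoundedlyGeneratedBy m g) (x : G) :
    ∃ k : Fin m → ℤ, Fin.partialProd (fun i => g i ^ k i) (Fin.last m) = x := by
  obtain ⟨k, rfl⟩ := hg x
  exact ⟨k, by rw [Fin.partialProd, Fin.val_last, List.take_of_length_le (by simp)]⟩

lemma IsBoundedlyGeneratedBy.exists_schreierElement_mem {m : ℕ} {g : Fin m → G}
    (hg : IsBoundedlyGeneratedBy m g) {N M : Subgroup G} {T : Set (G ⧸ N)}
    (hT : AbsorbsTuples G (m + 1) T)
    (hM : ∀ i, ∀ k : ℤ, ∀ u ∈ T, g i ^ k • u ∈ T → schreierElement N (g i ^ k) u ∈ M) (x : G) :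
    ∃ u : G ⧸ N, schreierElement N x u ∈ M := by
  obtain ⟨k, hk⟩ := hg.exists_partialProd_eq x⁻¹
  obtain ⟨u, hu⟩ := hT fun j => (Fin.partialProd (fun i => g i ^ k i) j)⁻¹
  refine ⟨u, ?_⟩
  rw [← inv_inv x, ← hk]
  refine schreierElement_inv_partialProd_mem (fun i => ?_) (Fin.last m)
  rw [← zpow_neg]
  refine hM i _ _ (hu i.castSucc) ?_
  rw [zpow_neg, smul_smul, ← mul_inv_rev, ← Fin.partialProd_succ]
  exact hu i.succ

lemma IsBoundedlyGeneratedBy.exists_finset_closure_finiteIndex {m : ℕ} {g : Fin m → G}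
    (hg : IsBoundedlyGeneratedBy m g) {N : Subgroup G} [N.FiniteIndex] {T : Set (G ⧸ N)}
    (hT : AbsorbsTuples G (m + 1) T) :
    ∃ S : Finset G, S.card ≤ m * T.ncard ∧ Subgroup.closure (S : Set G) ≤ N ∧
      (Subgroup.closure (S : Set G)).FiniteIndex := by
  classical
  choose S hScard hSN hS using fun i => exists_finset_schreierElement_zpow_mem N T (g i)
  refine ⟨Finset.univ.biUnion S, ?_, ?_, ?_⟩
  · simpa using Finset.card_biUnion_le_card_mul Finset.univ S T.ncard fun i _ => hScard i
  · simpa [Subgroup.closure_le] using hSN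
  · refine finiteIndex_of_twoSided_cover (ι := G ⧸ N) Quotient.out fun x => ?_
    obtain ⟨u, hu⟩ := hg.exists_schreierElement_mem hT (fun i k v hv hkv => Subgroup.closure_mono
      (Finset.coe_subset.2 (Finset.subset_biUnion_of_mem S (Finset.mem_univ i)))
      (hS i k v hv hkv)) x
    exact ⟨u, x • u, hu⟩

lemma exists_finiteIndex_lt [Infinite G] [Group.ResiduallyFinite G] (K : Subgroup G)
    [K.FiniteIndex] : ∃ L < K, L.FiniteIndex := by
  have hK : K ≠ ⊥ := by
    rintro rfl
    exact Subgroup.FiniteIndex.index_ne_zero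
      ((Subgroup.index_bot (G := G)).trans Nat.card_eq_zero_of_infinite)
  obtain ⟨x, hxK, hx1⟩ := K.bot_or_exists_ne_one.resolve_left hK
  obtain ⟨P, hP, hxP⟩ := Group.residuallyFinite_iff_exists_finiteIndex.1 ‹_› x hx1
  exact ⟨K ⊓ P, inf_lt_left.2 fun hKP => hxP (hKP hxK), inferInstance⟩

theorem exists_finiteIndex_le_index [Infinite G] [Group.ResiduallyFinite G] (n : ℕ) :
    ∃ K : Subgroup G, K.FiniteIndex ∧ n ≤ K.index := by
  induction n with
  | zero => exact ⟨⊤, inferInstance, Nat.zero_le _⟩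
  | succ n ih =>
    obtain ⟨K, hK, hn⟩ := ih
    obtain ⟨L, hLK, hL⟩ := exists_finiteIndex_lt K
    exact ⟨L, hL, hn.trans_lt (Subgroup.index_strictAnti hLK)⟩

theorem rank_gradient_zero_of_bounded_generation_general {m : ℕ}
    (hbg : ∃ g : Fin m → G, IsBoundedlyGeneratedBy m g)
    (hG : ∀ n : ℕ, ∃ K : Subgroup G, K.FiniteIndex ∧ n ≤ K.index) :
    ∀ ε : ℝ, 0 < ε → ∃ H : Subgroup G, H.index ≠ 0 ∧
      ∃ S : Finset G, Subgroup.closure (S : Set G) = H ∧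
        ((S.card : ℝ) - 1) / (H.index : ℝ) < ε := by
  intro ε hε
  obtain ⟨g, hg⟩ := hbg
  obtain ⟨N, hN, T, hTcard, hT⟩ :=
    exists_sparse_absorbsTuples hG (m + 1) (show 0 < ε / (m + 1) by positivity)
  obtain ⟨S, hScard, hSN, hSfin⟩ := hg.exists_finset_closure_finiteIndex hT
  refine ⟨_, hSfin.index_ne_zero, S, rfl, ?_⟩
  have index_pos : 0 < ((Subgroup.closure (S : Set G)).index : ℝ) :=
    mod_cast Nat.pos_of_ne_zero hSfin.index_ne_zero
  rw [div_lt_iff₀ index_pos]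
  calc (S.card : ℝ) - 1 < S.card := sub_one_lt _
    _ ≤ m * T.ncard := mod_cast hScard
    _ ≤ (m + 1) * (ε / (m + 1) * N.index) := by gcongr; linarith
    _ = ε * N.index := by field_simp
    _ ≤ ε * (Subgroup.closure (S : Set G)).index := by gcongr

end RankGradient

/-- Let `m` be a positive integer and let `G` be an infinite, residually finite,
`m`-boundedly generated group (residual finiteness is stated via the equivalent
characterization: every nontrivial element avoids some finite-index normal subgroup).
Then the rank gradient of `G` is `0`: for every `ε > 0` there is a finite-index
subgroup `H ≤ G` with `(rank H − 1) / [G : H] < ε`, witnessed by a generating set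
`S` of `H` with `(|S| − 1) / [G : H] < ε`. -/
theorem rank_gradient_zero_of_bounded_generation
    {G : Type*} [Group G] [Infinite G] (m : ℕ) (hm : 0 < m)
    (hbg : ∃ g : Fin m → G, IsBoundedlyGeneratedBy m g)
    (hrf : ∀ x : G, x ≠ 1 → ∃ N : Subgroup G, N.Normal ∧ N.index ≠ 0 ∧ x ∉ N) :
    ∀ ε : ℝ, 0 < ε → ∃ H : Subgroup G, H.index ≠ 0 ∧
      ∃ S : Finset G, Subgroup.closure (S : Set G) = H ∧
        ((S.card : ℝ) - 1) / (H.index : ℝ) < ε := by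
  have : Group.ResiduallyFinite G := Group.residuallyFinite_iff_exists_finiteIndex.2 fun x hx =>
    let ⟨N, _, hN, hxN⟩ := hrf x hx
    ⟨N, ⟨hN⟩, hxN⟩
  exact rank_gradient_zero_of_bounded_generation_general hbg exists_finiteIndex_le_index
end

section
/- Let G = SL₄(ℤ), let r be a positive integer, let p₁, …, p_r be the first r odd primes, and let L_r ≤ G be the preimage under the reduction map G → ∏_{i=1}^r SL₄(𝔽_{p_i}) of the subgroup ∏_{i=1}^r {±I₄}. Then for all sufficiently large r, the index satisfies r^{r/2} ≤ [G : L_r] ≤ (2r)^{48r}. -/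
instance : Fact (Even (Fintype.card (Fin 4))) := ⟨⟨2, rfl⟩⟩

/-- The `i`-th odd prime (`i = 0` gives `3`): the `(i+1)`-st prime number. -/
noncomputable def oddPrime (i : ℕ) : ℕ := Nat.nth Nat.Prime (i + 1)

/-- Simultaneous reduction map `SL₄(ℤ) → ∏_{i<r} SL₄(𝔽_{pᵢ})`, where
`p₀, …, p_{r-1}` are the first `r` odd primes. -/
noncomputable def redMap (r : ℕ) :
    Matrix.SpecialLinearGroup (Fin 4) ℤ →*
      ∀ i : Fin r, Matrix.SpecialLinearGroup (Fin 4) (ZMod (oddPrime i)) :=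
  Pi.monoidHom fun i =>
    Matrix.SpecialLinearGroup.map (Int.castRingHom (ZMod (oddPrime i)))

/-- `Lr r ≤ SL₄(ℤ)` is the preimage under the reduction map
`SL₄(ℤ) → ∏_{i<r} SL₄(𝔽_{pᵢ})` of the subgroup `∏_{i<r} {±I₄}`
(the subgroup `{±I₄}` is the cyclic subgroup generated by `-I₄`). -/
noncomputable def Lr (r : ℕ) : Subgroup (Matrix.SpecialLinearGroup (Fin 4) ℤ) :=
  Subgroup.comap (redMap r)
    (Subgroup.pi Set.univ fun _ => Subgroup.zpowers (-1))

/-!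
Let `K` be a finite-index subgroup of `SL_n(ℤ)` whose elements are all central modulo `m`. Some
power `T ^ k` of an elementary transvection `T = 1 + E_ij`, with `0 < k ≤ [SL_n(ℤ) : K]`, lies in
`K`; but `T ^ k` has the off-diagonal entry `k`, so it is central modulo `m` only if `m ∣ k`, hence
`m ≤ [SL_n(ℤ) : K]`. With `m = p₁ ⋯ p_r` this gives `[G : L_r] ≥ p₁ ⋯ p_r ≥ r! ≥ r ^ (r/2)`.

In the other direction `[G : L_r] ≤ ∏ |SL₄(𝔽_{pᵢ})| ≤ (p₁ ⋯ p_r) ^ 16`, and Chebyshev's inequality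
`2 ^ N ≤ (N + 1) lcm(1, …, N) ≤ (N + 1) N ^ π(N)` at `N = (2k) ^ 3` yields `p_k ≤ (2k) ^ 3`.
-/

open Finset Matrix

theorem index_comap_dvd_card {G H : Type*} [Group G] [Group H] (f : G →* H) (K : Subgroup H) :
    (K.comap f).index ∣ Nat.card H := by
  rw [Subgroup.index_comap]
  exact (Subgroup.relIndex_dvd_card K f.range).trans f.range.card_subgroup_dvd_card

section SpecialLinearGroup

variable {n R : Type*} [Fintype n] [DecidableEq n] [CommRing R]

theorem card_specialLinearGroup_le [Finite R] :
    Nat.card (SpecialLinearGroup n R) ≤ Nat.card R ^ Fintype.card n ^ 2 := by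
  calc Nat.card (SpecialLinearGroup n R) ≤ Nat.card (n → n → R) :=
        Nat.card_le_card_of_injective (fun A => A.1) Subtype.val_injective
    _ = Nat.card R ^ Fintype.card n ^ 2 := by
        simp [Nat.card_fun, pow_mul, sq]

theorem neg_one_mem_center_specialLinearGroup [Fact (Even (Fintype.card n))] :
    (-1 : SpecialLinearGroup n R) ∈ Subgroup.center (SpecialLinearGroup n R) := by
  simp [Subgroup.mem_center_iff]

variable {i j : n} (hij : i ≠ j)

theorem map_transvection {S : Type*} [CommRing S] (f : R →+* S) (b : R) :
    SpecialLinearGroup.map f (SpecialLinearGroup.transvection hij b) =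
      SpecialLinearGroup.transvection hij (f b) := by
  ext k l
  simp [SpecialLinearGroup.transvection_coe, Matrix.single_apply, Matrix.one_apply, apply_ite f]

theorem transvection_pow (b : R) (k : ℕ) :
    SpecialLinearGroup.transvection hij b ^ k = SpecialLinearGroup.transvection hij (k • b) := by
  induction k with
  | zero => simp [SpecialLinearGroup.transvection_coeff_zero]
  | succ k ih => rw [pow_succ, ih, ← SpecialLinearGroup.transvection_add, succ_nsmul]

theorem transvection_one_pow_mem_center_iff (m : ℕ) [CharP R m] (k : ℕ) :
    SpecialLinearGroup.transvection hij (1 : R) ^ k ∈ Subgroup.center (SpecialLinearGroup n R) ↔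
      m ∣ k := by
  rw [transvection_pow, SpecialLinearGroup.transvection_mem_center_iff, nsmul_one,
    CharP.cast_eq_zero_iff R m]

theorem prod_le_index_of_map_mem_center [Nontrivial n] {ι : Type*} [Fintype ι]
    {S : ι → Type*} [∀ i, CommRing (S i)] {m : ι → ℕ} [∀ i, CharP (S i) (m i)]
    (hm : Pairwise (Function.onFun Nat.Coprime m)) (f : ∀ i, R →+* S i)
    {K : Subgroup (SpecialLinearGroup n R)} [K.FiniteIndex]
    (hK : ∀ A ∈ K, ∀ i, SpecialLinearGroup.map (f i) A ∈ Subgroup.center _) :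
    ∏ i, m i ≤ K.index := by
  obtain ⟨a, b, hab⟩ := exists_pair_ne n
  obtain ⟨k, hk_pos, hk_le, hk_mem⟩ := Subgroup.exists_pow_mem_of_index_ne_zero
    K.index_ne_zero_of_finite (SpecialLinearGroup.transvection hab (1 : R))
  have hdvd (i : ι) : m i ∣ k := by
    have hcenter := hK _ hk_mem i
    rwa [map_pow, map_transvection, map_one, transvection_one_pow_mem_center_iff hab (m i)]
      at hcenter
  exact (Nat.le_of_dvd hk_pos (Fintype.prod_dvd_of_isRelPrime
    (fun i j hij => Nat.coprime_iff_isRelPrime.mp (hm hij)) hdvd)).trans hk_le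

end SpecialLinearGroup

theorem pow_self_le_factorial_sq (n : ℕ) : n ^ n ≤ n.factorial ^ 2 := by
  calc n ^ n = ∏ _i ∈ range n, n := by simp
    _ ≤ ∏ i ∈ range n, (i + 1) * (n - i) := by
        refine prod_le_prod' fun i hi => ?_
        obtain ⟨k, rfl⟩ := Nat.exists_eq_add_of_lt (mem_range.mp hi)
        rw [add_assoc, Nat.add_sub_cancel_left]
        nlinarith
    _ = n.factorial ^ 2 := by
        rw [prod_mul_distrib, prod_range_add_one_eq_factorial, ← Nat.descFactorial_eq_prod_range,
          Nat.descFactorial_self, sq]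

theorem rpow_half_self_le_factorial (n : ℕ) : (n : ℝ) ^ ((n : ℝ) / 2) ≤ n.factorial := by
  rw [Real.rpow_div_two_eq_sqrt _ n.cast_nonneg, Real.rpow_natCast]
  refine le_of_sq_le_sq ?_ (by positivity)
  rw [pow_right_comm, Real.sq_sqrt n.cast_nonneg]
  exact_mod_cast pow_self_le_factorial_sq n

theorem two_pow_le_succ_mul_pow_primeCounting (n : ℕ) :
    2 ^ n ≤ (n + 1) * n ^ n.primeCounting := by
  refine (Chebyshev.two_pow_le_mul_lcmUpto n).trans (Nat.mul_le_mul_left _ ?_)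
  rw [Nat.lcmUpto_eq_prod_pow_log, ← Nat.primesLE_card_eq_primeCounting]
  refine prod_le_pow_card _ _ _ fun p hp => Nat.pow_log_le_self p ?_
  exact ((Nat.prime_of_mem_primesLE hp).pos.trans_le (Nat.le_of_mem_primesLE hp)).ne'

theorem lt_primeCounting_two_mul_pow_three {k : ℕ} (hk : 0 < k) :
    k < ((2 * k) ^ 3).primeCounting := by
  by_contra! hπ
  have hN : (2 * k) ^ 3 ≤ 2 ^ (3 * k) := by
    have hk_le : 2 * k ≤ 2 ^ k := by
      obtain ⟨j, rfl⟩ := Nat.exists_eq_add_one.mpr hk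
      rw [pow_succ']
      exact Nat.mul_le_mul_left 2 Nat.lt_two_pow_self
    calc (2 * k) ^ 3 ≤ (2 ^ k) ^ 3 := Nat.pow_le_pow_left hk_le 3
      _ = 2 ^ (3 * k) := by rw [← pow_mul, mul_comm]
  have hN_succ : (2 * k) ^ 3 + 1 ≤ 2 ^ (3 * k + 1) := by
    rw [pow_succ 2, mul_two]
    exact Nat.add_le_add hN Nat.one_le_two_pow
  have hpow : 2 ^ (2 * k) ^ 3 ≤ 2 ^ (3 * k + 1 + 3 * k * k) := by
    calc 2 ^ (2 * k) ^ 3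
        ≤ ((2 * k) ^ 3 + 1) * ((2 * k) ^ 3) ^ ((2 * k) ^ 3).primeCounting :=
          two_pow_le_succ_mul_pow_primeCounting _
      _ ≤ ((2 * k) ^ 3 + 1) * ((2 * k) ^ 3) ^ k := by
          gcongr
          exact Nat.one_le_pow _ _ (by positivity)
      _ ≤ 2 ^ (3 * k + 1) * (2 ^ (3 * k)) ^ k := by gcongr
      _ = 2 ^ (3 * k + 1 + 3 * k * k) := by rw [← pow_mul, ← pow_add]
  have hexp : (2 * k) ^ 3 ≤ 3 * k + 1 + 3 * k * k :=
    (Nat.pow_le_pow_iff_right one_lt_two).mp hpow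
  nlinarith [Nat.mul_le_mul_left k hk, Nat.mul_le_mul_left (k * k) hk]

theorem nth_prime_le {k : ℕ} (hk : 0 < k) : Nat.nth Nat.Prime k ≤ (2 * k) ^ 3 :=
  Nat.le_of_lt_succ (Nat.nth_lt_of_lt_count (lt_primeCounting_two_mul_pow_three hk))

instance (i : ℕ) : Fact (oddPrime i).Prime := ⟨Nat.prime_nth_prime _⟩

theorem pairwise_coprime_oddPrime : Pairwise (Function.onFun Nat.Coprime oddPrime) := by
  intro i j hij
  refine (Nat.coprime_primes Fact.out Fact.out).mpr fun h => hij ?_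
  exact Nat.succ_injective (Nat.nth_injective Nat.infinite_setOfPred_prime h)

theorem factorial_le_prod_oddPrime (r : ℕ) : r.factorial ≤ ∏ i : Fin r, oddPrime i := by
  rw [Fin.prod_univ_eq_prod_range oddPrime, ← prod_range_add_one_eq_factorial]
  exact prod_le_prod' fun i _ => (Nat.le_add_right _ 2).trans (Nat.add_two_le_nth_prime _)

instance (r : ℕ) : (Lr r).FiniteIndex :=
  ⟨ne_zero_of_dvd_ne_zero Nat.card_pos.ne' (index_comap_dvd_card (redMap r) _)⟩

theorem map_mem_center_of_mem_Lr {r : ℕ} {A : SpecialLinearGroup (Fin 4) ℤ} (hA : A ∈ Lr r)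
    (i : Fin r) :
    SpecialLinearGroup.map (Int.castRingHom (ZMod (oddPrime i))) A ∈ Subgroup.center _ :=
  Subgroup.zpowers_le.mpr neg_one_mem_center_specialLinearGroup (hA i (Set.mem_univ i))

theorem prod_oddPrime_le_index_Lr (r : ℕ) : ∏ i : Fin r, oddPrime i ≤ (Lr r).index :=
  prod_le_index_of_map_mem_center (pairwise_coprime_oddPrime.comp_of_injective Fin.val_injective)
    _ fun _ => map_mem_center_of_mem_Lr

theorem index_Lr_le_prod_oddPrime_pow (r : ℕ) : (Lr r).index ≤ (∏ i : Fin r, oddPrime i) ^ 16 := by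
  calc (Lr r).index ≤ Nat.card (∀ i : Fin r, SpecialLinearGroup (Fin 4) (ZMod (oddPrime i))) :=
        Nat.le_of_dvd Nat.card_pos (index_comap_dvd_card (redMap r) _)
    _ = ∏ i : Fin r, Nat.card (SpecialLinearGroup (Fin 4) (ZMod (oddPrime i))) := Nat.card_pi
    _ ≤ ∏ i : Fin r, oddPrime i ^ 16 := prod_le_prod' fun i _ => by
        simpa using card_specialLinearGroup_le (n := Fin 4) (R := ZMod (oddPrime i))
    _ = (∏ i : Fin r, oddPrime i) ^ 16 := prod_pow ..

theorem prod_oddPrime_le_pow (r : ℕ) : ∏ i : Fin r, oddPrime i ≤ (2 * r) ^ (3 * r) := by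
  calc ∏ i : Fin r, oddPrime i ≤ ∏ _i : Fin r, (2 * r) ^ 3 := prod_le_prod' fun i _ =>
        (nth_prime_le i.val.succ_pos).trans (Nat.pow_le_pow_left (Nat.mul_le_mul_left 2 i.isLt) 3)
    _ = (2 * r) ^ (3 * r) := by simp [← pow_mul]

theorem index_Lr_bounds_general (r : ℕ) :
    (r : ℝ) ^ ((r : ℝ) / 2) ≤ ((Lr r).index : ℝ) ∧
      ((Lr r).index : ℝ) ≤ ((2 * r : ℕ) : ℝ) ^ (48 * r) := by
  constructor
  · calc (r : ℝ) ^ ((r : ℝ) / 2) ≤ r.factorial := rpow_half_self_le_factorial r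
      _ ≤ (Lr r).index := by
        exact_mod_cast (factorial_le_prod_oddPrime r).trans (prod_oddPrime_le_index_Lr r)
  · norm_cast
    calc (Lr r).index ≤ (∏ i : Fin r, oddPrime i) ^ 16 := index_Lr_le_prod_oddPrime_pow r
      _ ≤ ((2 * r) ^ (3 * r)) ^ 16 := Nat.pow_le_pow_left (prod_oddPrime_le_pow r) 16
      _ = (2 * r) ^ (48 * r) := by rw [← pow_mul]; congr 1; ring

/-- Let `G = SL₄(ℤ)`, let `r` be a positive integer, let `p₁, …, p_r` be the first `r`
odd primes, and let `L_r ≤ G` be the preimage under the reduction map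
`G → ∏ SL₄(𝔽_{pᵢ})` of `∏ {±I₄}`.  Then for all sufficiently large `r`,
`r ^ (r/2) ≤ [G : L_r] ≤ (2r) ^ (48r)`. -/
theorem index_Lr_bounds :
    ∃ r₀ : ℕ, ∀ r : ℕ, r₀ ≤ r →
      (r : ℝ) ^ ((r : ℝ) / 2) ≤ ((Lr r).index : ℝ) ∧
        ((Lr r).index : ℝ) ≤ ((2 * r : ℕ) : ℝ) ^ (48 * r) :=
  ⟨0, fun r _ => index_Lr_bounds_general r⟩
end
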